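/- arXiv:2301.11192 — 2 statements merged into one kernel-verified Lean document; each statement's English description precedes it below -/
import Mathlib

section
/- For every integer k ≥ 0, b₂₁(4k + 1) is congruent modulo 2 to the number of pairs (x, y) of nonnegative integers satisfying 8x^2 + 3y^2 = 24k + 11 and 3 ∤ y. -/
/-- `b21 n` is the number of 21-regular partitions of `n`,
i.e. partitions of `n` none of whose parts is divisible by 21. -/
def b21 (n : ℕ) : ℕ :=
  (Finset.univ.filter fun c : n.Partition => ∀ i ∈ c.parts, ¬ (21 ∣ i)).card

/-!
All series are taken modulo 2. Write `P = ∏ (1 - q ^ n)` and `θ_m = ∑ q ^ (z ^ 2)` over the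
natural numbers `z` coprime to `m`. Squaring a series substitutes `q ^ 2` for `q`, and the
pentagonal number theorem reads `q P(q ^ 24) = θ_6`.

Multiplying `x + y √-2` by `1 + √-2` and `x + y √-7` by `3 ± √-7` relates the representations of
`n` to those of `3 n` and `16 n`, and conjugation `y ↦ -y` leaves only representations with `y = 0`
to be counted modulo 2. This gives `θ_6 θ_6(q ^ 2) = θ_2(q ^ 3)`, `θ_6 θ_3(q ^ 8) = θ_2(q ^ 9)`,
and a comparison of coefficients of `θ_2(q ^ 3) θ_6(q ^ 21)` with those of `θ_6(q ^ 12)`.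

The generating function of `b21` is `P(q ^ 21) / P`. Multiplied by `P(q ^ 4) = P ^ 4` it becomes
`P ^ 3 P(q ^ 21)`, which is `θ_2(q ^ 3) θ_6(q ^ 21)` up to rescaling, so the comparison yields
`P ∑ b21(4 n + 1) q ^ n = P(q ^ 12)`. Since `θ_6(q ^ 12) = θ_6(q ^ 3) ^ 4`, the two product
identities turn the quotient `P(q ^ 12) / P` into `θ_3(q ^ 8) θ_6(q ^ 3)`.
-/

/-! ### Parity of representation numbers -/

theorem odd_ncard_iff_odd_ncard_fixed {α : Type*} {s : Set α} {σ : α → α} (hs : s.Finite)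
    (hσ : Function.Involutive σ) (hmaps : Set.MapsTo σ s s) :
    Odd s.ncard ↔ Odd {a ∈ s | σ a = a}.ncard := by
  have hmoved : (({a ∈ s | σ a ≠ a}.ncard : ℕ) : ZMod 2) = 0 := by
    have hfin : {a ∈ s | σ a ≠ a}.Finite := hs.sep _
    rw [Set.ncard_eq_toFinset_card _ hfin, Finset.cast_card]
    refine Finset.sum_involution (fun a _ ↦ σ a) (fun _ _ ↦ CharTwo.add_self_eq_zero 1)
      (fun a ha _ ↦ (hfin.mem_toFinset.1 ha).2) (fun a ha ↦ ?_) (fun a _ ↦ hσ a)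
    obtain ⟨has, hne⟩ := hfin.mem_toFinset.1 ha
    exact hfin.mem_toFinset.2 ⟨hmaps has, fun h ↦ hne (hσ.injective h)⟩
  have hsplit : {a ∈ s | σ a = a}.ncard + {a ∈ s | σ a ≠ a}.ncard = s.ncard := by
    rw [← Set.ncard_union_eq (Set.disjoint_left.2 fun _ h h' ↦ absurd h.2 h'.2) (hs.sep _)
      (hs.sep _)]
    congr 1
    ext a
    by_cases h : σ a = a <;> simp [h]
  rw [← ZMod.natCast_eq_one_iff_odd, ← ZMod.natCast_eq_one_iff_odd, ← hsplit, Nat.cast_add,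
    hmoved, add_zero]

theorem odd_ncard_iff_nonempty_of_subsingleton {α : Type*} {s : Set α} (hs : s.Subsingleton) :
    Odd s.ncard ↔ s.Nonempty := by
  rcases hs.eq_empty_or_singleton with rfl | ⟨a, rfl⟩ <;> simp

theorem finite_sq_add_mul_sq_eq {m : ℤ} (hm : 0 < m) (n : ℤ) :
    {p : ℤ × ℤ | p.1 ^ 2 + m * p.2 ^ 2 = n}.Finite := by
  refine ((Set.finite_Icc (-n) n).prod (Set.finite_Icc (-n) n)).subset ?_
  rintro ⟨x, y⟩ (h : x ^ 2 + m * y ^ 2 = n)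
  have hx := Int.le_self_sq x
  have hx' := Int.le_self_sq (-x)
  have hy := Int.le_self_sq y
  have hy' := Int.le_self_sq (-y)
  have hmy : y ^ 2 ≤ m * y ^ 2 := le_mul_of_one_le_left (sq_nonneg y) hm
  rw [neg_sq] at hx' hy'
  simp only [Set.mem_prod, Set.mem_Icc]
  constructor <;> constructor <;> linarith [sq_nonneg x, sq_nonneg y]

theorem odd_ncard_iff_exists_axis {m n : ℤ} {s : Set (ℤ × ℤ)} (hm : 0 < m)
    (hs : ∀ p ∈ s, 0 < p.1 ∧ p.1 ^ 2 + m * p.2 ^ 2 = n)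
    (hconj : ∀ x y, (x, y) ∈ s → (x, -y) ∈ s) :
    Odd s.ncard ↔ ∃ x, (x, 0) ∈ s := by
  have hσ : Function.Involutive fun p : ℤ × ℤ ↦ (p.1, -p.2) := fun p ↦ by simp
  have hfin : s.Finite := (finite_sq_add_mul_sq_eq hm n).subset fun p hp ↦ (hs p hp).2
  have haxis : {p ∈ s | (p.1, -p.2) = p}.Subsingleton := by
    rintro ⟨x, y⟩ ⟨hp, hy⟩ ⟨x', y'⟩ ⟨hp', hy'⟩
    obtain rfl : y = 0 := by simpa [neg_eq_self] using hy
    obtain rfl : y' = 0 := by simpa [neg_eq_self] using hy'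
    obtain ⟨hx, h⟩ := hs _ hp
    obtain ⟨hx', h'⟩ := hs _ hp'
    simpa using (pow_left_inj₀ hx.le hx'.le two_ne_zero).1 (by simpa using h.trans h'.symm)
  rw [odd_ncard_iff_odd_ncard_fixed hfin hσ fun p hp ↦ hconj _ _ hp,
    odd_ncard_iff_nonempty_of_subsingleton haxis]
  constructor
  · rintro ⟨⟨x, y⟩, hp, hy⟩
    obtain rfl : y = 0 := by simpa [neg_eq_self] using hy
    exact ⟨x, hp⟩
  · rintro ⟨x, hx⟩
    exact ⟨(x, 0), hx, by simp⟩

theorem ncard_eq_two_mul_ncard_fst_pos {s : Set (ℤ × ℤ)} (hs : s.Finite)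
    (hneg : ∀ p ∈ s, -p ∈ s) (hne : ∀ p ∈ s, p.1 ≠ 0) :
    s.ncard = 2 * {p ∈ s | 0 < p.1}.ncard := by
  have hunion : s = {p ∈ s | 0 < p.1} ∪ Neg.neg '' {p ∈ s | 0 < p.1} := by
    ext p
    simp only [Set.image_neg_eq_neg, Set.mem_union, Set.mem_neg, Set.mem_ofPred_eq, Prod.fst_neg]
    constructor
    · intro hp
      rcases (hne p hp).lt_or_gt with h | h
      · exact .inr ⟨hneg p hp, by lia⟩
      · exact .inl ⟨hp, h⟩
    · rintro (hp | hp)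
      · exact hp.1
      · simpa using hneg _ hp.1
  have hdisj : Disjoint {p ∈ s | 0 < p.1} (Neg.neg '' {p ∈ s | 0 < p.1}) := by
    rw [Set.disjoint_left]
    rintro _ ⟨-, hp⟩ ⟨q, ⟨-, hq⟩, rfl⟩
    simp only [Prod.fst_neg] at hp
    lia
  have hfin := hs.sep fun p ↦ 0 < p.1
  conv_lhs => rw [hunion]
  rw [Set.ncard_union_eq hdisj hfin (hfin.image _), Set.ncard_image_of_injective _ neg_injective,
    two_mul]

theorem ncard_fst_pos_eq_of_natAbs {s : Set (ℤ × ℤ)} {t : Set (ℕ × ℕ)}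
    (hmaps : ∀ x y, (x, y) ∈ s → (x.natAbs, y.natAbs) ∈ t)
    (hsurj : ∀ x y : ℕ, (x, y) ∈ t → 0 < x ∧ (((x : ℤ), (y : ℤ)) ∈ s ∨ ((x : ℤ), -(y : ℤ)) ∈ s))
    (hinj : ∀ x y, (x, y) ∈ s → (x, -y) ∈ s → y = 0) :
    {p ∈ s | 0 < p.1}.ncard = t.ncard := by
  refine Set.ncard_congr (fun p _ ↦ (p.1.natAbs, p.2.natAbs)) (fun p hp ↦ hmaps _ _ hp.1) ?_ ?_
  · rintro ⟨x, y⟩ ⟨x', y'⟩ ⟨hp, hx : 0 < x⟩ ⟨hp', hx' : 0 < x'⟩ h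
    rw [Prod.mk.injEq] at h
    obtain rfl : x = x' := by lia
    rcases Int.natAbs_eq_natAbs_iff.1 h.2 with rfl | rfl
    · rfl
    · rw [hinj _ _ hp' hp, neg_zero]
  · rintro ⟨x, y⟩ h
    obtain ⟨hx, hp | hp⟩ := hsurj x y h
    · exact ⟨_, ⟨hp, Int.natCast_pos.2 hx⟩, by simp⟩
    · exact ⟨_, ⟨hp, Int.natCast_pos.2 hx⟩, by simp⟩

theorem ncard_fst_pos_image_eq {s : Set (ℤ × ℤ)} {e : ℤ × ℤ → ℤ × ℤ} (he : e.Injective)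
    (hs : s.Finite) (hneg : ∀ p ∈ s, -p ∈ s) (hne : ∀ p ∈ s, p.1 ≠ 0)
    (hneg' : ∀ p ∈ e '' s, -p ∈ e '' s) (hne' : ∀ p ∈ e '' s, p.1 ≠ 0) :
    {p ∈ e '' s | 0 < p.1}.ncard = {p ∈ s | 0 < p.1}.ncard := by
  refine Nat.eq_of_mul_eq_mul_left two_pos ?_
  rw [← ncard_eq_two_mul_ncard_fst_pos hs hneg hne,
    ← ncard_eq_two_mul_ncard_fst_pos (hs.image e) hneg' hne', Set.ncard_image_of_injective _ he]

/-! ### Representations by `x ^ 2 + 2 * y ^ 2` -/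

/-- The integer representations of `n` by `x ^ 2 + 2 * y ^ 2` with `3 ∤ x + y`. If `3 ∣ n`, they
comprise exactly one of `(x, y)` and `(x, -y)` for every representation with `3 ∤ x` and `3 ∤ y`. -/
def sqAddTwoSqReps (n : ℤ) : Set (ℤ × ℤ) :=
  {p | p.1 ^ 2 + 2 * p.2 ^ 2 = n ∧ ¬ 3 ∣ p.1 + p.2}

theorem finite_sqAddTwoSqReps (n : ℤ) : (sqAddTwoSqReps n).Finite :=
  (finite_sq_add_mul_sq_eq two_pos n).subset fun _ hp ↦ hp.1

theorem neg_mem_sqAddTwoSqReps {n : ℤ} {p : ℤ × ℤ} (hp : p ∈ sqAddTwoSqReps n) :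
    -p ∈ sqAddTwoSqReps n := by
  refine ⟨by simpa using hp.1, ?_⟩
  rw [Prod.fst_neg, Prod.snd_neg, ← neg_add, dvd_neg]
  exact hp.2

theorem fst_ne_zero_of_mem_sqAddTwoSqReps {n : ℤ} (hn : ¬ 2 ∣ n) {p : ℤ × ℤ}
    (hp : p ∈ sqAddTwoSqReps n) : p.1 ≠ 0 := by
  intro h
  refine hn ⟨p.2 ^ 2, ?_⟩
  rw [← hp.1, h]
  ring

theorem three_dvd_sub_of_mem_sqAddTwoSqReps {n x y : ℤ} (h : (x, y) ∈ sqAddTwoSqReps (3 * n)) :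
    3 ∣ x - y := by
  have hmul : 3 ∣ (x - y) * (x + y) := ⟨n - y ^ 2, by linear_combination h.1⟩
  exact (Int.prime_three.dvd_or_dvd hmul).resolve_right h.2

-- This is multiplication by `1 + √-2`, of norm `3`.
theorem sqAddTwoSqReps_three_mul (n : ℤ) :
    sqAddTwoSqReps (3 * n) =
      (fun p : ℤ × ℤ ↦ (p.1 - 2 * p.2, p.1 + p.2)) '' sqAddTwoSqReps n := by
  ext ⟨u, v⟩
  constructor
  · intro h
    obtain ⟨t, ht⟩ := three_dvd_sub_of_mem_sqAddTwoSqReps h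
    obtain ⟨h, hdvd⟩ := h
    obtain rfl : u = v + 3 * t := by lia
    exact ⟨(v + t, -t), ⟨by linarith, by lia⟩, by ext <;> dsimp only <;> ring⟩
  · rintro ⟨⟨x, y⟩, ⟨h, hdvd⟩, hp⟩
    obtain ⟨rfl, rfl⟩ := Prod.mk.injEq .. ▸ hp
    exact ⟨by linear_combination 3 * h, by lia⟩

theorem ncard_fst_pos_sqAddTwoSqReps_three_mul {n : ℤ} (hn : ¬ 2 ∣ n) :
    {p ∈ sqAddTwoSqReps (3 * n) | 0 < p.1}.ncard = {p ∈ sqAddTwoSqReps n | 0 < p.1}.ncard := by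
  have himage := sqAddTwoSqReps_three_mul n
  rw [himage]
  refine ncard_fst_pos_image_eq ?_ (finite_sqAddTwoSqReps n)
    (fun _ ↦ neg_mem_sqAddTwoSqReps) (fun _ ↦ fst_ne_zero_of_mem_sqAddTwoSqReps hn) ?_ ?_
  · rintro ⟨x, y⟩ ⟨x', y'⟩ h
    grind
  · exact himage ▸ fun _ ↦ neg_mem_sqAddTwoSqReps
  · exact himage ▸ fun _ ↦ fst_ne_zero_of_mem_sqAddTwoSqReps (by lia)

theorem odd_ncard_fst_pos_sqAddTwoSqReps_of_not_three_dvd {n : ℤ} (h2 : ¬ 2 ∣ n) (h3 : ¬ 3 ∣ n) :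
    Odd {p ∈ sqAddTwoSqReps n | 0 < p.1}.ncard ↔ ∃ z, z ^ 2 = n := by
  have hconj : ∀ x y, (x, y) ∈ {p ∈ sqAddTwoSqReps n | 0 < p.1} →
      (x, -y) ∈ {p ∈ sqAddTwoSqReps n | 0 < p.1} := by
    rintro x y ⟨⟨h, -⟩, hx⟩
    refine ⟨⟨by simpa using h, fun hdvd ↦ h3 ?_⟩, hx⟩
    have hmul : 3 ∣ (x + -y) * (x + y) := hdvd.mul_right _
    rw [← h]
    exact (dvd_iff_dvd_of_dvd_sub ⟨y ^ 2, by ring⟩).2 hmul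
  rw [odd_ncard_iff_exists_axis two_pos (fun p hp ↦ ⟨hp.2, hp.1.1⟩) hconj]
  constructor
  · rintro ⟨x, ⟨h, -⟩, -⟩
    exact ⟨x, by simpa using h⟩
  · rintro ⟨z, rfl⟩
    have hz : z ≠ 0 := by rintro rfl; exact h2 (by simp)
    refine ⟨|z|, ⟨by simp, ?_⟩, abs_pos.2 hz⟩
    rw [add_zero, dvd_abs]
    exact fun h ↦ h3 (dvd_pow h two_ne_zero)

theorem odd_ncard_fst_pos_sqAddTwoSqReps {n : ℕ} (hn : ¬ 2 ∣ n) :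
    Odd {p ∈ sqAddTwoSqReps n | 0 < p.1}.ncard ↔ ∃ z, z ^ 2 = n ∨ 3 * z ^ 2 = n := by
  induction n using Nat.strong_induction_on with
  | _ n ih =>
    by_cases h3 : 3 ∣ n
    · obtain ⟨m, rfl⟩ := h3
      rw [Nat.cast_mul, Nat.cast_ofNat, ncard_fst_pos_sqAddTwoSqReps_three_mul (by lia),
        ih m (by lia) (by lia)]
      constructor
      · rintro ⟨z, rfl | rfl⟩
        · exact ⟨z, .inr rfl⟩
        · exact ⟨3 * z, .inl (by ring)⟩
      · rintro ⟨z, h | h⟩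
        · obtain ⟨w, rfl⟩ := Nat.prime_three.dvd_of_dvd_pow ⟨m, h⟩
          exact ⟨w, .inr (by linarith)⟩
        · exact ⟨z, .inl (by linarith)⟩
    · rw [odd_ncard_fst_pos_sqAddTwoSqReps_of_not_three_dvd (by lia) (by lia)]
      constructor
      · rintro ⟨z, h⟩
        exact ⟨z.natAbs, .inl (by zify; rwa [sq_abs])⟩
      · rintro ⟨z, h | h⟩
        · exact ⟨z, by exact_mod_cast h⟩
        · exact absurd ⟨_, h.symm⟩ h3

theorem odd_ncard_sq_add_two_mul_sq {n : ℕ} (hn : ¬ 2 ∣ n) :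
    Odd {p : ℕ × ℕ | p.1 ^ 2 + 2 * p.2 ^ 2 = 3 * n ∧ ¬ 3 ∣ p.1 ∧ ¬ 3 ∣ p.2}.ncard ↔
      ∃ z, z ^ 2 = n ∨ 3 * z ^ 2 = n := by
  rw [← odd_ncard_fst_pos_sqAddTwoSqReps hn,
    ← ncard_fst_pos_sqAddTwoSqReps_three_mul (by lia), ← ncard_fst_pos_eq_of_natAbs]
  · intro x y h
    have := three_dvd_sub_of_mem_sqAddTwoSqReps h
    obtain ⟨h, hdvd⟩ := h
    refine ⟨by zify; simpa using h, ?_, ?_⟩ <;> lia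
  · rintro x y ⟨h, hx, -⟩
    zify at h
    refine ⟨by lia, ?_⟩
    by_cases hdvd : (3 : ℤ) ∣ x + y
    · exact .inr ⟨by simpa using h, by lia⟩
    · exact .inl ⟨h, hdvd⟩
  · intro x y h h'
    have := three_dvd_sub_of_mem_sqAddTwoSqReps h
    have := three_dvd_sub_of_mem_sqAddTwoSqReps h'
    have := h.2
    lia

/-! ### Representations by `x ^ 2 + 7 * y ^ 2` -/

/-- The integer representations of `n` by `x ^ 2 + 7 * y ^ 2` with `3 ∤ x`. -/
def sqAddSevenSqReps (n : ℤ) : Set (ℤ × ℤ) :=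
  {p | p.1 ^ 2 + 7 * p.2 ^ 2 = n ∧ ¬ 3 ∣ p.1}

/-- The integer representations of `16 * n` by `x ^ 2 + 7 * y ^ 2` with `3 ∤ y` and
`x ≡ 3 * y [ZMOD 16]`. For odd `n`, they comprise exactly one of `(x, y)` and `(x, -y)` for every
representation with `x` and `y` odd and `3 ∤ y`. -/
def sqAddSevenSqRepsSixteenMul (n : ℤ) : Set (ℤ × ℤ) :=
  {p | p.1 ^ 2 + 7 * p.2 ^ 2 = 16 * n ∧ ¬ 3 ∣ p.2 ∧ 16 ∣ p.1 - 3 * p.2}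

theorem neg_mem_sqAddSevenSqReps {n : ℤ} {p : ℤ × ℤ} (hp : p ∈ sqAddSevenSqReps n) :
    -p ∈ sqAddSevenSqReps n :=
  ⟨by simpa using hp.1, by simpa using hp.2⟩

theorem neg_mem_sqAddSevenSqRepsSixteenMul {n : ℤ} {p : ℤ × ℤ}
    (hp : p ∈ sqAddSevenSqRepsSixteenMul n) : -p ∈ sqAddSevenSqRepsSixteenMul n := by
  refine ⟨by simpa using hp.1, by simpa using hp.2.1, ?_⟩
  rw [Prod.fst_neg, Prod.snd_neg, mul_neg, ← neg_sub', dvd_neg]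
  exact hp.2.2

-- This is multiplication by `3 - √-7`, of norm `16`, followed by conjugation.
theorem sqAddSevenSqRepsSixteenMul_eq_image (n : ℤ) :
    sqAddSevenSqRepsSixteenMul n =
      (fun p : ℤ × ℤ ↦ (3 * p.1 + 7 * p.2, p.1 - 3 * p.2)) '' sqAddSevenSqReps n := by
  ext ⟨u, v⟩
  constructor
  · rintro ⟨h, hdvd, t, ht⟩
    obtain rfl : u = 3 * v + 16 * t := by lia
    exact ⟨(v + 3 * t, t), ⟨by linarith, by lia⟩, by ext <;> dsimp only <;> ring⟩
  · rintro ⟨⟨x, y⟩, ⟨h, hdvd⟩, hp⟩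
    obtain ⟨rfl, rfl⟩ := Prod.mk.injEq .. ▸ hp
    exact ⟨by linear_combination 16 * h, by lia, ⟨y, by ring⟩⟩

theorem odd_of_mem_sqAddSevenSqRepsSixteenMul {n x y : ℤ} (hn : ¬ 2 ∣ n)
    (h : (x, y) ∈ sqAddSevenSqRepsSixteenMul n) : ¬ 2 ∣ x ∧ ¬ 2 ∣ y := by
  rw [sqAddSevenSqRepsSixteenMul_eq_image] at h
  obtain ⟨⟨a, b⟩, ⟨hab, -⟩, hp⟩ := h
  obtain ⟨rfl, rfl⟩ := Prod.mk.injEq .. ▸ hp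
  have hodd : ¬ 2 ∣ a + b := fun hdvd ↦ by
    have hmul : 2 ∣ (a + b) * (a - b) := hdvd.mul_right _
    rw [← hab] at hn
    exact hn ((dvd_iff_dvd_of_dvd_sub ⟨4 * b ^ 2, by ring⟩).2 hmul)
  lia

theorem ncard_fst_pos_sqAddSevenSqRepsSixteenMul {n : ℤ} (hn : ¬ 2 ∣ n) :
    {p ∈ sqAddSevenSqRepsSixteenMul n | 0 < p.1}.ncard =
      {p ∈ sqAddSevenSqReps n | 0 < p.1}.ncard := by
  have himage := sqAddSevenSqRepsSixteenMul_eq_image n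
  rw [himage]
  refine ncard_fst_pos_image_eq ?_
    ((finite_sq_add_mul_sq_eq (by norm_num) n).subset fun _ hp ↦ hp.1)
    (fun _ ↦ neg_mem_sqAddSevenSqReps) (fun p hp h0 ↦ hp.2 (h0 ▸ dvd_zero 3)) ?_ ?_
  · rintro ⟨x, y⟩ ⟨x', y'⟩ h
    grind
  · exact himage ▸ fun _ ↦ neg_mem_sqAddSevenSqRepsSixteenMul
  · exact himage ▸ fun p hp h0 ↦
      (odd_of_mem_sqAddSevenSqRepsSixteenMul hn hp).1 (h0 ▸ dvd_zero 2)

theorem odd_ncard_fst_pos_sqAddSevenSqReps (n : ℤ) :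
    Odd {p ∈ sqAddSevenSqReps n | 0 < p.1}.ncard ↔ ∃ z, ¬ 3 ∣ z ∧ z ^ 2 = n := by
  have hconj : ∀ x y, (x, y) ∈ {p ∈ sqAddSevenSqReps n | 0 < p.1} →
      (x, -y) ∈ {p ∈ sqAddSevenSqReps n | 0 < p.1} :=
    fun x y hp ↦ ⟨⟨by simpa using hp.1.1, hp.1.2⟩, hp.2⟩
  rw [odd_ncard_iff_exists_axis (m := 7) (by norm_num) (fun p hp ↦ ⟨hp.2, hp.1.1⟩) hconj]
  constructor
  · rintro ⟨x, ⟨h, hdvd⟩, -⟩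
    exact ⟨x, hdvd, by simpa using h⟩
  · rintro ⟨z, hdvd, rfl⟩
    exact ⟨|z|, ⟨by simp, by rwa [dvd_abs]⟩, abs_pos.2 fun h ↦ hdvd (h ▸ dvd_zero 3)⟩

theorem sixteen_dvd_sub_or_add {x y n : ℤ} (hx : ¬ 2 ∣ x) (hy : ¬ 2 ∣ y) (hn : ¬ 2 ∣ n)
    (h : x ^ 2 + 7 * y ^ 2 = 16 * n) : 16 ∣ x - 3 * y ∨ 16 ∣ x + 3 * y := by
  obtain ⟨s, hs⟩ : 2 ∣ x - 3 * y := by lia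
  have hy2 : ¬ 2 ∣ y ^ 2 := fun h2 ↦ hy (Int.prime_two.dvd_of_dvd_pow h2)
  obtain ⟨e, he⟩ : 2 ∣ n - y ^ 2 := by lia
  have hmul : s * (s + 3 * y) = 2 ^ 3 * e := by
    obtain rfl : x = 3 * y + 2 * s := by lia
    linarith
  by_cases h2 : 2 ∣ s
  · have hcop : IsCoprime (2 ^ 3) (s + 3 * y) :=
      (Int.prime_two.coprime_iff_not_dvd.2 (by lia)).pow_left
    have := hcop.dvd_of_dvd_mul_right ⟨e, hmul⟩
    exact .inl (by lia)
  · have hcop : IsCoprime (2 ^ 3) s := (Int.prime_two.coprime_iff_not_dvd.2 h2).pow_left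
    have := hcop.dvd_of_dvd_mul_left ⟨e, hmul⟩
    exact .inr (by lia)

theorem odd_ncard_sq_add_seven_mul_sq {n : ℕ} (hn : ¬ 2 ∣ n) :
    Odd {p : ℕ × ℕ | p.1 ^ 2 + 7 * p.2 ^ 2 = 16 * n ∧ ¬ 2 ∣ p.1 ∧ ¬ 2 ∣ p.2 ∧ ¬ 3 ∣ p.2}.ncard ↔
      ∃ z, ¬ 3 ∣ z ∧ z ^ 2 = n := by
  have hn' : ¬ (2 : ℤ) ∣ n := by lia
  have hcard : {p ∈ sqAddSevenSqRepsSixteenMul n | 0 < p.1}.ncard =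
      {p : ℕ × ℕ | p.1 ^ 2 + 7 * p.2 ^ 2 = 16 * n ∧ ¬ 2 ∣ p.1 ∧ ¬ 2 ∣ p.2 ∧ ¬ 3 ∣ p.2}.ncard := by
    apply ncard_fst_pos_eq_of_natAbs
    · intro x y h
      have hodd := odd_of_mem_sqAddSevenSqRepsSixteenMul hn' h
      obtain ⟨h, hdvd, -⟩ := h
      refine ⟨by zify; simpa using h, ?_, ?_, ?_⟩ <;> lia
    · rintro x y ⟨h, hx, hy, hdvd⟩
      zify at h
      refine ⟨by lia, (sixteen_dvd_sub_or_add (by lia) (by lia) hn' h).imp (fun h16 ↦ ?_)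
        fun h16 ↦ ?_⟩
      · exact ⟨h, by lia, h16⟩
      · exact ⟨by simpa using h, by lia, by lia⟩
    · intro x y h h'
      have := odd_of_mem_sqAddSevenSqRepsSixteenMul hn' h
      have := h.2.2
      have := h'.2.2
      lia
  rw [← hcard, ncard_fst_pos_sqAddSevenSqRepsSixteenMul hn', odd_ncard_fst_pos_sqAddSevenSqReps]
  constructor
  · rintro ⟨z, hdvd, h⟩
    exact ⟨z.natAbs, by lia, by zify; rwa [sq_abs]⟩
  · rintro ⟨z, hdvd, h⟩
    exact ⟨z, by lia, by exact_mod_cast h⟩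

open PowerSeries
open Finset.HasAntidiagonal (antidiagonal mem_antidiagonal)

/-! ### Power series and the pentagonal number theorem -/

section General

variable {R : Type*} [CommRing R]

theorem coeff_mul_add_expand_mul {k r : ℕ} (hk : k ≠ 0) (hr : r < k) (f g : R⟦X⟧) (n : ℕ) :
    coeff (k * n + r) (expand k hk f * g) =
      coeff n (f * mk fun i ↦ coeff (k * i + r) g) := by
  rw [coeff_mul, coeff_mul]
  symm
  refine Finset.sum_of_injOn (fun p ↦ (k * p.1, k * p.2 + r)) ?_ ?_ ?_ ?_
  · rintro ⟨a, b⟩ _ ⟨c, d⟩ _ h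
    simpa [hk] using h
  · rintro ⟨a, b⟩ h
    simp only [Finset.mem_coe, mem_antidiagonal] at h ⊢
    rw [← h]
    ring
  · rintro ⟨a, b⟩ h himage
    rw [coeff_expand_of_not_dvd, zero_mul]
    rintro ⟨c, rfl⟩
    rw [mem_antidiagonal] at h
    have hc : c ≤ n := Nat.lt_succ_iff.1 (lt_of_mul_lt_mul_left (a := k) (by lia) k.zero_le)
    refine himage ⟨(c, n - c), by simp [mem_antidiagonal, hc], ?_⟩
    rw [Prod.mk.injEq, Nat.mul_sub]
    have := Nat.mul_le_mul_left k hc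
    exact ⟨rfl, by lia⟩
  · rintro ⟨a, b⟩ _
    rw [coeff_expand_mul, coeff_mk]

theorem expand_expand_comm {j k : ℕ} (hj : j ≠ 0) (hk : k ≠ 0) (f : R⟦X⟧) :
    expand j hj (expand k hk f) = expand k hk (expand j hj f) := by
  simp only [← expand_mul, mul_comm j k]

theorem expand_eq_pow_card {p : ℕ} [Fact p.Prime] (hp : p ≠ 0) (f : (ZMod p)⟦X⟧) :
    expand p hp f = f ^ p := by
  have h := MvPowerSeries.map_frobenius_expand p hp (f := f)
  rwa [ZMod.frobenius_zmod, MvPowerSeries.map_id] at h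

theorem expand_four_eq_pow (f : (ZMod 2)⟦X⟧) : expand 4 four_ne_zero f = f ^ 4 := by
  have h := expand_mul 2 two_ne_zero 2 two_ne_zero f
  rwa [expand_eq_pow_card, expand_eq_pow_card, ← pow_mul] at h

open WithPiTopology in
theorem hasProd_one_sub_X_pow_mul [TopologicalSpace R] {m : ℕ} (hm : m ≠ 0) :
    HasProd (fun i ↦ (1 - X ^ (m * (i + 1)) : R⟦X⟧)) (expand m hm (pentagonalSeries R)) := by
  have hcont : Continuous (expand (R := R) m hm) := by
    refine continuous_iff_continuousAt.2 fun f ↦ ?_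
    refine (tendsto_iff_coeff_tendsto ..).2 fun d ↦ ?_
    simp only [coeff_expand]
    split_ifs
    · exact (continuous_coeff ..).tendsto f
    · exact tendsto_const_nhds
  have hprod := (hasProd_one_sub_X_pow R).map (expand (R := R) m hm) hcont
  simpa only [Function.comp_def, map_sub, map_one, map_pow, expand_X, ← pow_mul] using hprod

variable (R) in
open WithPiTopology in
theorem mk_card_countRestricted_mul_pentagonalSeries {m : ℕ} (hm : m ≠ 0) :
    (mk fun n ↦ ((Nat.Partition.countRestricted n m).card : R)) * pentagonalSeries R =
      expand m hm (pentagonalSeries R) := by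
  let _ : TopologicalSpace R := ⊥
  have _ : DiscreteTopology R := ⟨rfl⟩
  have hprod := (Nat.Partition.hasProd_powerSeriesMk_card_countRestricted R
    (Nat.pos_of_ne_zero hm)).mul (hasProd_one_sub_X_pow R)
  refine hprod.unique ?_
  convert! hasProd_one_sub_X_pow_mul hm using 2
  ext1 i
  simp_rw [mul_comm m, pow_mul]
  exact geom_sum_mul_neg (X ^ (i + 1) : R⟦X⟧) m

end General

theorem mk_b21_mul_pentagonalSeries (R : Type*) [CommRing R] :
    (mk fun n ↦ (b21 n : R)) * pentagonalSeries R =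
      expand 21 (by norm_num) (pentagonalSeries R) := by
  rw [← mk_card_countRestricted_mul_pentagonalSeries]
  congr! 4 with n
  exact Nat.Partition.card_restricted_eq_card_countRestricted n (m := 21) (by norm_num)

/-! ### Theta series -/

theorem subsingleton_setOf_mul_sq_eq (p : ℕ → Prop) {k : ℕ} (hk : k ≠ 0) (n : ℕ) :
    {z : ℕ | p z ∧ k * z ^ 2 = n}.Subsingleton := by
  rintro x ⟨-, hx⟩ y ⟨-, rfl⟩
  exact Nat.pow_left_injective two_ne_zero (Nat.eq_of_mul_eq_mul_left (Nat.pos_of_ne_zero hk) hx)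

section Theta

variable (R : Type*) [CommRing R]

/-- The theta series `∑ q ^ (z ^ 2)` over the natural numbers `z` coprime to `m`, as a formal power
series over `R`. -/
noncomputable def theta (m : ℕ) : R⟦X⟧ :=
  mk fun n ↦ ({z : ℕ | z.Coprime m ∧ z ^ 2 = n}.ncard : R)

theorem coeff_expand_theta (m : ℕ) {k : ℕ} (hk : k ≠ 0) (n : ℕ) :
    coeff n (expand k hk (theta R m)) = ({z : ℕ | z.Coprime m ∧ k * z ^ 2 = n}.ncard : R) := by
  rw [coeff_expand]
  split_ifs with h
  · obtain ⟨n, rfl⟩ := h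
    simp only [Nat.mul_div_cancel_left _ (Nat.pos_of_ne_zero hk), theta, coeff_mk,
      mul_right_inj' hk]
  · have hempty : {z : ℕ | z.Coprime m ∧ k * z ^ 2 = n} = ∅ :=
      Set.eq_empty_of_forall_notMem fun z hz ↦ h ⟨_, hz.2.symm⟩
    rw [hempty, Set.ncard_empty, Nat.cast_zero]

theorem coeff_expand_theta_mul_expand_theta (m m' : ℕ) {j k : ℕ} (hj : j ≠ 0) (hk : k ≠ 0)
    (n : ℕ) :
    coeff n (expand j hj (theta R m) * expand k hk (theta R m')) =
      ({p : ℕ × ℕ | p.1.Coprime m ∧ p.2.Coprime m' ∧ j * p.1 ^ 2 + k * p.2 ^ 2 = n}.ncard : R) := by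
  let t (d : ℕ × ℕ) : Set (ℕ × ℕ) :=
    {z | z.Coprime m ∧ j * z ^ 2 = d.1} ×ˢ {z | z.Coprime m' ∧ k * z ^ 2 = d.2}
  have hunion : {p : ℕ × ℕ | p.1.Coprime m ∧ p.2.Coprime m' ∧ j * p.1 ^ 2 + k * p.2 ^ 2 = n} =
      ⋃ d ∈ antidiagonal n, t d := by
    ext p
    simp only [t, Set.mem_iUnion₂, mem_antidiagonal, Set.mem_prod, Set.mem_ofPred_eq]
    constructor
    · rintro ⟨hm, hm', h⟩
      exact ⟨(_, _), h, ⟨hm, rfl⟩, hm', rfl⟩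
    · rintro ⟨d, hd, ⟨hm, h⟩, hm', h'⟩
      exact ⟨hm, hm', by rwa [h, h']⟩
  have hfin (d : ℕ × ℕ) : (t d).Finite :=
    (subsingleton_setOf_mul_sq_eq _ hj _).finite.prod (subsingleton_setOf_mul_sq_eq _ hk _).finite
  have hdisj : (↑(antidiagonal n) : Set (ℕ × ℕ)).PairwiseDisjoint t := by
    refine fun d _ d' _ hne ↦ Set.disjoint_left.2 fun p hp hp' ↦ hne ?_
    exact Prod.ext (hp.1.2.symm.trans hp'.1.2) (hp.2.2.symm.trans hp'.2.2)
  have hcard := (antidiagonal n).finite_toSet.ncard_biUnion (fun d _ ↦ hfin d) hdisj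
  simp only [Finset.mem_coe, finsum_mem_finset_eq_sum] at hcard
  rw [hunion, hcard, coeff_mul, Nat.cast_sum]
  refine Finset.sum_congr rfl fun d _ ↦ ?_
  rw [coeff_expand_theta, coeff_expand_theta, Set.ncard_prod, Nat.cast_mul]

theorem coeff_theta_mul_expand_theta (m m' : ℕ) {k : ℕ} (hk : k ≠ 0) (n : ℕ) :
    coeff n (theta R m * expand k hk (theta R m')) =
      ({p : ℕ × ℕ | p.1.Coprime m ∧ p.2.Coprime m' ∧ p.1 ^ 2 + k * p.2 ^ 2 = n}.ncard : R) := by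
  simpa only [expand_one, AlgHom.coe_id, id_eq, one_mul] using
    coeff_expand_theta_mul_expand_theta R m m' one_ne_zero hk n

end Theta

theorem odd_ncard_setOf_mul_sq_eq (p : ℕ → Prop) {k : ℕ} (hk : k ≠ 0) (n : ℕ) :
    Odd {z : ℕ | p z ∧ k * z ^ 2 = n}.ncard ↔ ∃ z, p z ∧ k * z ^ 2 = n :=
  odd_ncard_iff_nonempty_of_subsingleton (subsingleton_setOf_mul_sq_eq p hk n)

theorem natCast_zmod_two_eq_natCast_iff {a b : ℕ} : (a : ZMod 2) = b ↔ (Odd a ↔ Odd b) := by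
  rw [ZMod.natCast_eq_natCast_iff', Nat.odd_iff, Nat.odd_iff]
  lia

theorem coprime_two_iff {z : ℕ} : z.Coprime 2 ↔ ¬ 2 ∣ z := by
  rw [Nat.coprime_comm, Nat.prime_two.coprime_iff_not_dvd]

theorem coprime_three_iff {z : ℕ} : z.Coprime 3 ↔ ¬ 3 ∣ z := by
  rw [Nat.coprime_comm, Nat.prime_three.coprime_iff_not_dvd]

theorem coprime_six_iff {z : ℕ} : z.Coprime 6 ↔ ¬ 2 ∣ z ∧ ¬ 3 ∣ z := by
  rw [← coprime_two_iff, ← coprime_three_iff, ← Nat.coprime_mul_iff_right]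

theorem sq_mod_three_of_coprime_three {z : ℕ} (hz : z.Coprime 3) : z ^ 2 % 3 = 1 := by
  rw [coprime_three_iff] at hz
  obtain h | h : z % 3 = 1 ∨ z % 3 = 2 := by lia
  all_goals rw [Nat.pow_mod, h]

theorem sq_mod_eight_of_coprime_two {z : ℕ} (hz : z.Coprime 2) : z ^ 2 % 8 = 1 := by
  have := Nat.eight_dvd_sq_sub_one_of_odd (Nat.coprime_two_right.1 hz)
  have := Nat.pos_of_ne_zero (pow_ne_zero 2 (Nat.coprime_two_right.1 hz).pos.ne')
  lia

theorem sq_mod_twentyFour_of_coprime_six {z : ℕ} (hz : z.Coprime 6) : z ^ 2 % 24 = 1 := by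
  have := sq_mod_eight_of_coprime_two (hz.coprime_dvd_right (by norm_num))
  have := sq_mod_three_of_coprime_three (hz.coprime_dvd_right (by norm_num))
  lia

theorem sq_mod_eight_ne_three (z : ℕ) : z ^ 2 % 8 ≠ 3 := by
  by_cases hz : 2 ∣ z
  · obtain ⟨a, rfl⟩ := hz
    lia
  · have := sq_mod_eight_of_coprime_two (coprime_two_iff.2 hz)
    lia

theorem coprime_two_of_sq {z : ℕ} (hz : ¬ 2 ∣ z ^ 2) : z.Coprime 2 :=
  coprime_two_iff.2 fun h ↦ hz (dvd_pow h two_ne_zero)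

theorem odd_ncard_coprime_sq_add_two_mul_sq {n : ℕ} (hn : n % 8 = 1) :
    Odd {p : ℕ × ℕ | p.1.Coprime 6 ∧ p.2.Coprime 6 ∧ p.1 ^ 2 + 2 * p.2 ^ 2 = 3 * n}.ncard ↔
      ∃ z, z ^ 2 = n := by
  have hset : {p : ℕ × ℕ | p.1.Coprime 6 ∧ p.2.Coprime 6 ∧ p.1 ^ 2 + 2 * p.2 ^ 2 = 3 * n} =
      {p | p.1 ^ 2 + 2 * p.2 ^ 2 = 3 * n ∧ ¬ 3 ∣ p.1 ∧ ¬ 3 ∣ p.2} := by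
    ext ⟨x, y⟩
    simp only [coprime_six_iff, Set.mem_ofPred_eq]
    refine ⟨by tauto, fun ⟨h, hx, hy⟩ ↦ ?_⟩
    have hx2 : x.Coprime 2 := coprime_two_of_sq (by lia)
    have := sq_mod_eight_of_coprime_two hx2
    have hy2 : y.Coprime 2 := coprime_two_of_sq (by lia)
    exact ⟨⟨coprime_two_iff.1 hx2, hx⟩, ⟨coprime_two_iff.1 hy2, hy⟩, h⟩
  rw [hset, odd_ncard_sq_add_two_mul_sq (by lia)]
  refine exists_congr fun z ↦ or_iff_left ?_
  have := sq_mod_eight_ne_three z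
  lia

theorem odd_ncard_coprime_sq_add_eight_mul_sq {n : ℕ} (hn : n % 8 = 3) :
    Odd {p : ℕ × ℕ | p.1.Coprime 6 ∧ p.2.Coprime 3 ∧ p.1 ^ 2 + 8 * p.2 ^ 2 = 3 * n}.ncard ↔
      ∃ z, 3 * z ^ 2 = n := by
  have himage : {p : ℕ × ℕ | p.1 ^ 2 + 2 * p.2 ^ 2 = 3 * n ∧ ¬ 3 ∣ p.1 ∧ ¬ 3 ∣ p.2} =
      (fun p : ℕ × ℕ ↦ (p.1, 2 * p.2)) ''
        {p | p.1.Coprime 6 ∧ p.2.Coprime 3 ∧ p.1 ^ 2 + 8 * p.2 ^ 2 = 3 * n} := by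
    ext ⟨x, y⟩
    simp only [coprime_six_iff, coprime_three_iff, Set.mem_ofPred_eq, Set.mem_image]
    constructor
    · rintro ⟨h, hx, hy⟩
      have hx2 : x.Coprime 2 := coprime_two_of_sq (by lia)
      have := sq_mod_eight_of_coprime_two hx2
      obtain ⟨v, rfl⟩ : 2 ∣ y := by
        by_contra hy2
        have := sq_mod_eight_of_coprime_two (coprime_two_iff.2 hy2)
        lia
      exact ⟨(x, v), ⟨⟨coprime_two_iff.1 hx2, hx⟩, by lia, by lia⟩, rfl⟩
    · rintro ⟨⟨u, v⟩, ⟨hu, hv, h⟩, hp⟩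
      obtain ⟨rfl, rfl⟩ := Prod.mk.injEq .. ▸ hp
      exact ⟨by lia, hu.2, by lia⟩
  have hinj : (fun p : ℕ × ℕ ↦ (p.1, 2 * p.2)).Injective := by
    rintro ⟨x, y⟩ ⟨x', y'⟩ h
    simpa using h
  rw [← Set.ncard_image_of_injective _ hinj, ← himage, odd_ncard_sq_add_two_mul_sq (by lia)]
  refine exists_congr fun z ↦ or_iff_right ?_
  have := sq_mod_eight_ne_three z
  lia

theorem theta_six_mul_expand_two_theta_six :
    theta (ZMod 2) 6 * expand 2 two_ne_zero (theta (ZMod 2) 6) =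
      expand 3 three_ne_zero (theta (ZMod 2) 2) := by
  ext n
  rw [coeff_theta_mul_expand_theta, coeff_expand_theta, natCast_zmod_two_eq_natCast_iff,
    odd_ncard_setOf_mul_sq_eq _ three_ne_zero]
  by_cases hn : n % 24 = 3
  · obtain ⟨m, rfl, hm⟩ : ∃ m, n = 3 * m ∧ m % 8 = 1 := ⟨n / 3, by lia, by lia⟩
    rw [odd_ncard_coprime_sq_add_two_mul_sq hm]
    exact exists_congr fun z ↦ ⟨fun h ↦ ⟨coprime_two_of_sq (by lia), by lia⟩, by lia⟩
  · have hempty : {p : ℕ × ℕ | p.1.Coprime 6 ∧ p.2.Coprime 6 ∧ p.1 ^ 2 + 2 * p.2 ^ 2 = n} = ∅ := by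
      refine Set.eq_empty_of_forall_notMem fun p ⟨hx, hy, h⟩ ↦ hn ?_
      have := sq_mod_twentyFour_of_coprime_six hx
      have := sq_mod_twentyFour_of_coprime_six hy
      lia
    rw [hempty, Set.ncard_empty]
    refine iff_of_false (by decide) fun ⟨z, hz, h⟩ ↦ hn ?_
    have := sq_mod_eight_of_coprime_two hz
    lia

theorem theta_six_mul_expand_eight_theta_three :
    theta (ZMod 2) 6 * expand 8 (by norm_num) (theta (ZMod 2) 3) =
      expand 9 (by norm_num) (theta (ZMod 2) 2) := by
  ext n
  rw [coeff_theta_mul_expand_theta, coeff_expand_theta, natCast_zmod_two_eq_natCast_iff,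
    odd_ncard_setOf_mul_sq_eq _ (by norm_num)]
  by_cases hn : n % 24 = 9
  · obtain ⟨m, rfl, hm⟩ : ∃ m, n = 3 * m ∧ m % 8 = 3 := ⟨n / 3, by lia, by lia⟩
    rw [odd_ncard_coprime_sq_add_eight_mul_sq hm]
    exact exists_congr fun z ↦ ⟨fun h ↦ ⟨coprime_two_of_sq (by lia), by lia⟩, by lia⟩
  · have hempty : {p : ℕ × ℕ | p.1.Coprime 6 ∧ p.2.Coprime 3 ∧ p.1 ^ 2 + 8 * p.2 ^ 2 = n} = ∅ := by
      refine Set.eq_empty_of_forall_notMem fun p ⟨hx, hy, h⟩ ↦ hn ?_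
      have := sq_mod_twentyFour_of_coprime_six hx
      have := sq_mod_three_of_coprime_three hy
      lia
    rw [hempty, Set.ncard_empty]
    refine iff_of_false (by decide) fun ⟨z, hz, h⟩ ↦ hn ?_
    have := sq_mod_eight_of_coprime_two hz
    lia

theorem theta_six_pow_three :
    theta (ZMod 2) 6 ^ 3 = expand 3 three_ne_zero (theta (ZMod 2) 2) := by
  rw [← theta_six_mul_expand_two_theta_six, expand_eq_pow_card, ← pow_succ']

theorem coeff_expand_three_theta_two_mul_expand_twentyOne_theta_six {n : ℕ} (hn : ¬ 2 ∣ n) :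
    coeff (48 * n) (expand 3 three_ne_zero (theta (ZMod 2) 2) *
      expand 21 (by norm_num) (theta (ZMod 2) 6)) =
      coeff (12 * n) (expand 12 (by norm_num) (theta (ZMod 2) 6)) := by
  rw [coeff_expand_theta_mul_expand_theta, coeff_expand_theta, natCast_zmod_two_eq_natCast_iff,
    odd_ncard_setOf_mul_sq_eq _ (by norm_num)]
  have hset : {p : ℕ × ℕ | p.1.Coprime 2 ∧ p.2.Coprime 6 ∧ 3 * p.1 ^ 2 + 21 * p.2 ^ 2 = 48 * n} =
      {p | p.1 ^ 2 + 7 * p.2 ^ 2 = 16 * n ∧ ¬ 2 ∣ p.1 ∧ ¬ 2 ∣ p.2 ∧ ¬ 3 ∣ p.2} := by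
    ext p
    simp only [coprime_two_iff, coprime_six_iff, Set.mem_ofPred_eq]
    lia
  rw [hset, odd_ncard_sq_add_seven_mul_sq hn]
  refine exists_congr fun z ↦ ?_
  rw [coprime_six_iff]
  refine ⟨fun ⟨h3, h⟩ ↦ ⟨⟨fun h2 ↦ hn ?_, h3⟩, by rw [h]⟩, fun ⟨⟨_, h3⟩, h⟩ ↦ ⟨h3, ?_⟩⟩
  · exact h ▸ dvd_pow h2 two_ne_zero
  · exact Nat.eq_of_mul_eq_mul_left (by norm_num) h

theorem mem_range_pentagonal_iff {n : ℕ} :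
    n ∈ Set.range pentagonal ↔ ∃ z : ℕ, z.Coprime 6 ∧ z ^ 2 = 24 * n + 1 := by
  constructor
  · rintro ⟨k, rfl⟩
    have := two_mul_natCast_pentagonal k
    refine ⟨(6 * k - 1).natAbs, coprime_six_iff.2 ⟨by lia, by lia⟩, ?_⟩
    zify
    rw [sq_abs]
    linarith
  · rintro ⟨z, hz, h⟩
    rw [coprime_six_iff] at hz
    obtain ⟨k, hk⟩ : ∃ k : ℤ, z = 6 * k - 1 ∨ (z : ℤ) = -(6 * k - 1) := by
      obtain h | h : z % 6 = 1 ∨ z % 6 = 5 := by lia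
      · exact ⟨-(z / 6), .inr (by lia)⟩
      · exact ⟨z / 6 + 1, .inl (by lia)⟩
    have hsq : (z : ℤ) ^ 2 = (6 * k - 1) ^ 2 := sq_eq_sq_iff_eq_or_eq_neg.2 hk
    refine ⟨k, ?_⟩
    have := two_mul_natCast_pentagonal k
    zify at h ⊢
    linarith

theorem X_mul_expand_pentagonalSeries :
    X * expand 24 (by norm_num) (pentagonalSeries (ZMod 2)) = theta (ZMod 2) 6 := by
  have heq_of_eq_zero_iff : ∀ {a b : ZMod 2}, (a = 0 ↔ b = 0) → a = b := by decide
  ext n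
  refine heq_of_eq_zero_iff ?_
  rw [theta, coeff_mk, ZMod.natCast_eq_zero_iff_even, ← Nat.not_odd_iff_even]
  have htheta := odd_ncard_setOf_mul_sq_eq (·.Coprime 6) one_ne_zero n
  simp only [one_mul] at htheta
  rw [htheta]
  by_cases hn : n % 24 = 1
  · obtain ⟨m, rfl⟩ : ∃ m, n = 24 * m + 1 := ⟨n / 24, by lia⟩
    rw [coeff_succ_X_mul, coeff_expand_mul, coeff_pentagonalSeries_eq_zero_iff,
      mem_range_pentagonal_iff]
  · refine iff_of_true ?_ ?_
    · rw [← pow_one X, coeff_X_pow_mul', ite_eq_right_iff]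
      exact fun h ↦ coeff_expand_of_not_dvd _ _ _ (by lia)
    · rintro ⟨z, hz, rfl⟩
      exact hn (sq_mod_twentyFour_of_coprime_six hz)

theorem X_pow_mul_expand_expand_pentagonalSeries {k : ℕ} (hk : k ≠ 0) :
    X ^ k * expand 24 (by norm_num) (expand k hk (pentagonalSeries (ZMod 2))) =
      expand k hk (theta (ZMod 2) 6) := by
  rw [← X_mul_expand_pentagonalSeries, map_mul, expand_X, expand_expand_comm hk]

theorem pentagonalSeries_mul_mk_b21_four_mul_add_one :
    pentagonalSeries (ZMod 2) * mk (fun n ↦ (b21 (4 * n + 1) : ZMod 2)) =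
      expand 12 (by norm_num) (pentagonalSeries (ZMod 2)) := by
  set P := pentagonalSeries (ZMod 2)
  set B : (ZMod 2)⟦X⟧ := mk fun n ↦ (b21 n : ZMod 2) with hB
  have htheta : X ^ 24 * expand 24 (by norm_num) (P ^ 3 * expand 21 (by norm_num) P) =
      expand 3 three_ne_zero (theta (ZMod 2) 2) *
        expand 21 (by norm_num) (theta (ZMod 2) 6) := by
    rw [← theta_six_pow_three, ← X_pow_mul_expand_expand_pentagonalSeries,
      ← X_mul_expand_pentagonalSeries, map_mul, map_pow]
    ring
  ext n
  calc
    coeff n (P * mk fun n ↦ (b21 (4 * n + 1) : ZMod 2))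
      = coeff (4 * n + 1) (expand 4 four_ne_zero P * B) := by
        rw [coeff_mul_add_expand_mul four_ne_zero (by norm_num)]
        simp only [hB, coeff_mk]
    _ = coeff (4 * n + 1) (P ^ 3 * expand 21 (by norm_num) P) := by
        rw [expand_four_eq_pow, ← mk_b21_mul_pentagonalSeries, pow_succ, mul_assoc, mul_comm B]
    _ = coeff (48 * (2 * n + 1)) (X ^ 24 * expand 24 (by norm_num)
          (P ^ 3 * expand 21 (by norm_num) P)) := by
        rw [show 48 * (2 * n + 1) = 24 * (4 * n + 1) + 24 by ring, coeff_X_pow_mul,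
          coeff_expand_mul]
    _ = coeff (12 * (2 * n + 1)) (expand 12 (by norm_num) (theta (ZMod 2) 6)) := by
        rw [htheta, coeff_expand_three_theta_two_mul_expand_twentyOne_theta_six (by lia)]
    _ = coeff n (expand 12 (by norm_num) P) := by
        rw [← X_pow_mul_expand_expand_pentagonalSeries,
          show 12 * (2 * n + 1) = 24 * n + 12 by ring, coeff_X_pow_mul, coeff_expand_mul]

theorem expand_twelve_theta_six :
    expand 12 (by norm_num) (theta (ZMod 2) 6) = theta (ZMod 2) 6 *
      (expand 8 (by norm_num) (theta (ZMod 2) 3) * expand 3 three_ne_zero (theta (ZMod 2) 6)) := by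
  calc
    expand 12 (by norm_num) (theta (ZMod 2) 6)
      = expand 3 three_ne_zero (theta (ZMod 2) 6) ^ 4 := by
        rw [← map_pow, ← expand_four_eq_pow, ← expand_mul 3 three_ne_zero 4 four_ne_zero]
    _ = expand 3 three_ne_zero (theta (ZMod 2) 6 ^ 3) *
          expand 3 three_ne_zero (theta (ZMod 2) 6) := by
        rw [map_pow, pow_succ]
    _ = expand 9 (by norm_num) (theta (ZMod 2) 2) * expand 3 three_ne_zero (theta (ZMod 2) 6) := by
        rw [theta_six_pow_three, ← expand_mul 3 three_ne_zero 3 three_ne_zero]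
    _ = _ := by
        rw [← theta_six_mul_expand_eight_theta_three, mul_assoc]

theorem theta_six_ne_zero : theta (ZMod 2) 6 ≠ 0 := by
  intro h
  have h1 := congr_arg (coeff (24 * 0 + 1)) (X_mul_expand_pentagonalSeries.trans h)
  rw [coeff_succ_X_mul, coeff_expand_mul, map_zero, coeff_pentagonalSeries_eq_zero_iff] at h1
  exact h1 ⟨0, rfl⟩

theorem X_pow_eleven_mul_expand_mk_b21 :
    X ^ 11 * expand 24 (by norm_num) (mk fun n ↦ (b21 (4 * n + 1) : ZMod 2)) =
      expand 8 (by norm_num) (theta (ZMod 2) 3) * expand 3 three_ne_zero (theta (ZMod 2) 6) := by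
  refine mul_left_cancel₀ theta_six_ne_zero ?_
  rw [← expand_twelve_theta_six, ← X_pow_mul_expand_expand_pentagonalSeries,
    ← pentagonalSeries_mul_mk_b21_four_mul_add_one, ← X_mul_expand_pentagonalSeries, map_mul]
  ring

theorem coeff_expand_eight_theta_three_mul_expand_three_theta_six (k : ℕ) :
    coeff (24 * k + 11) (expand 8 (by norm_num) (theta (ZMod 2) 3) *
      expand 3 three_ne_zero (theta (ZMod 2) 6)) =
      {q : ℕ × ℕ | 8 * q.1 ^ 2 + 3 * q.2 ^ 2 = 24 * k + 11 ∧ ¬ 3 ∣ q.2}.ncard := by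
  rw [coeff_expand_theta_mul_expand_theta]
  congr 2
  ext ⟨x, y⟩
  simp only [coprime_three_iff, coprime_six_iff, Set.mem_ofPred_eq]
  refine ⟨fun ⟨_, hy, h⟩ ↦ ⟨h, hy.2⟩, fun ⟨h, hy⟩ ↦ ⟨fun hx ↦ ?_, ⟨fun hy2 ↦ ?_, hy⟩, h⟩⟩
  · have := dvd_pow hx two_ne_zero
    lia
  · have := dvd_pow hy2 two_ne_zero
    lia

theorem stmt_5 (k : ℕ) :
    b21 (4 * k + 1) ≡
      {q : ℕ × ℕ | 8 * q.1 ^ 2 + 3 * q.2 ^ 2 = 24 * k + 11 ∧ ¬ (3 ∣ q.2)}.ncard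
        [MOD 2] := by
  rw [← ZMod.natCast_eq_natCast_iff, ← coeff_expand_eight_theta_three_mul_expand_three_theta_six,
    ← X_pow_eleven_mul_expand_mk_b21, coeff_X_pow_mul, coeff_expand_mul, coeff_mk]
end

section
/- Let p be a prime with p ≡ 11 (mod 24) such that the Diophantine equation 8x^2 + 27y^2 = jp has a primitive solution for some j ∈ {1, 4, 8}. Then the set {(u, v) ∈ ℤ² : 8u^2 + 27v^2 = p and gcd(u, v) = 1} has exactly 4 elements. -/
/-!
For coprime `a, b` with `a * b > 1`, a prime `p` is represented by `a * x ^ 2 + b * y ^ 2` in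
at most one way up to signs: for two representations `(x, y)`, `(z, w)`, `p` divides
`(x * w - y * z) * (x * w + y * z)`, while composing them gives
`(a * x * z ± b * y * w) ^ 2 + a * b * (x * w ∓ y * z) ^ 2 = p ^ 2`, so that the factor divisible
by `p` vanishes. Every representation is primitive because `p` is squarefree. When
`p ≡ 11 (mod 24)`, solutions for `j = 4` are twice solutions for `j = 1`, and there are none for
`j = 8`, since `2` is not a square modulo `3`.
-/

theorem isRelPrime_of_squarefree_mul_sq_add_mul_sq {R : Type*} [CommSemiring R] {a b n x y : R}
    (hn : Squarefree n) (h : a * x ^ 2 + b * y ^ 2 = n) : IsRelPrime x y := by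
  rintro d ⟨u, rfl⟩ ⟨v, rfl⟩
  exact hn d ⟨a * u ^ 2 + b * v ^ 2, by rw [← h]; ring⟩

theorem dvd_cross_mul_of_mul_sq_add_mul_sq_eq {R : Type*} [CommRing R] {a b n x y z w : R}
    (hab : IsCoprime a b) (h₁ : a * x ^ 2 + b * y ^ 2 = n) (h₂ : a * z ^ 2 + b * w ^ 2 = n) :
    n ∣ (x * w - y * z) * (x * w + y * z) := by
  obtain ⟨s, t, hst⟩ := hab
  refine ⟨s * (w ^ 2 - y ^ 2) + t * (x ^ 2 - z ^ 2), ?_⟩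
  linear_combination (-((x * w - y * z) * (x * w + y * z))) * hst +
    (s * w ^ 2 - t * z ^ 2) * h₁ + (t * x ^ 2 - s * y ^ 2) * h₂

theorem eq_zero_of_dvd_of_sq_add_mul_sq_eq_sq {c p m n : ℤ} (hc : 1 < c)
    (h : n ^ 2 + c * m ^ 2 = p ^ 2) (hdvd : p ∣ m) : m = 0 := by
  by_contra hm
  have hm_sq : 0 < m ^ 2 := by positivity
  have hlt : m ^ 2 < p ^ 2 := by nlinarith [sq_nonneg n]
  exact hm (Int.eq_zero_of_abs_lt_dvd ((abs_dvd p m).mpr hdvd) (sq_lt_sq.mp hlt))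

/-- The set of primitive solutions `(x, y)` of the Diophantine equation
`a * x ^ 2 + b * y ^ 2 = n`. -/
def primitiveSolutions (a b n : ℤ) : Set (ℤ × ℤ) :=
  {q | a * q.1 ^ 2 + b * q.2 ^ 2 = n ∧ Int.gcd q.1 q.2 = 1}

section PrimeRepresentations

variable {a b p x y z w : ℤ}

theorem cross_mul_eq_zero_of_mul_sq_add_mul_sq_eq_prime (hab : IsCoprime a b) (hab1 : 1 < a * b)
    (hp : Prime p) (h₁ : a * x ^ 2 + b * y ^ 2 = p) (h₂ : a * z ^ 2 + b * w ^ 2 = p) :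
    (x * w - y * z) * (x * w + y * z) = 0 := by
  have hcomp_sub : (a * x * z + b * y * w) ^ 2 + a * b * (x * w - y * z) ^ 2 = p ^ 2 := by
    linear_combination (a * z ^ 2 + b * w ^ 2) * h₁ + p * h₂
  have hcomp_add : (a * x * z - b * y * w) ^ 2 + a * b * (x * w + y * z) ^ 2 = p ^ 2 := by
    linear_combination (a * z ^ 2 + b * w ^ 2) * h₁ + p * h₂
  exact mul_eq_zero.mpr <| (hp.dvd_or_dvd (dvd_cross_mul_of_mul_sq_add_mul_sq_eq hab h₁ h₂)).imp
    (eq_zero_of_dvd_of_sq_add_mul_sq_eq_sq hab1 hcomp_sub)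
    (eq_zero_of_dvd_of_sq_add_mul_sq_eq_sq hab1 hcomp_add)

theorem sq_eq_sq_of_mul_sq_add_mul_sq_eq_prime (hab : IsCoprime a b) (hab1 : 1 < a * b)
    (hp : Prime p) (h₁ : a * x ^ 2 + b * y ^ 2 = p) (h₂ : a * z ^ 2 + b * w ^ 2 = p) :
    z ^ 2 = x ^ 2 ∧ w ^ 2 = y ^ 2 := by
  have hcross := cross_mul_eq_zero_of_mul_sq_add_mul_sq_eq_prime hab hab1 hp h₁ h₂
  constructor <;> apply mul_left_cancel₀ hp.ne_zero
  · linear_combination (-b) * hcross - z ^ 2 * h₁ + x ^ 2 * h₂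
  · linear_combination a * hcross - w ^ 2 * h₁ + y ^ 2 * h₂

theorem primitiveSolutions_eq_prod_of_prime (hab : IsCoprime a b) (hab1 : 1 < a * b) (hp : Prime p)
    (h : a * x ^ 2 + b * y ^ 2 = p) :
    primitiveSolutions a b p = {x, -x} ×ˢ {y, -y} := by
  ext ⟨z, w⟩
  simp only [primitiveSolutions, Set.mem_ofPred_eq, Set.mem_prod, Set.mem_insert_iff,
    Set.mem_singleton_iff, ← sq_eq_sq_iff_eq_or_eq_neg]
  constructor
  · rintro ⟨hzw, -⟩
    exact sq_eq_sq_of_mul_sq_add_mul_sq_eq_prime hab hab1 hp h hzw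
  · rintro ⟨hz, hw⟩
    have hzw : a * z ^ 2 + b * w ^ 2 = p := by rw [hz, hw, h]
    exact ⟨hzw, Int.isCoprime_iff_gcd_eq_one.mp
      (isRelPrime_of_squarefree_mul_sq_add_mul_sq hp.squarefree hzw).isCoprime⟩

theorem ncard_primitiveSolutions_of_prime (hab : IsCoprime a b) (hab1 : 1 < a * b)
    (hp : Prime p) (hx : x ≠ 0) (hy : y ≠ 0) (h : a * x ^ 2 + b * y ^ 2 = p) :
    (primitiveSolutions a b p).ncard = 4 := by
  rw [primitiveSolutions_eq_prod_of_prime hab hab1 hp h, Set.ncard_prod,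
    Set.ncard_pair (self_ne_neg.mpr hx), Set.ncard_pair (self_ne_neg.mpr hy)]

end PrimeRepresentations

section FormEightTwentySeven

variable {n x y : ℤ}

theorem even_and_even_of_form_eight_twentySeven_eq_four_mul (hn : n % 8 = 3)
    (h : 8 * x ^ 2 + 27 * y ^ 2 = 4 * n) : Even x ∧ Even y := by
  have hy : Even y := by
    have hy_sq : Even (y ^ 2) := Int.even_iff.mpr (by lia)
    exact (Int.even_pow.mp hy_sq).1
  refine ⟨?_, hy⟩
  obtain ⟨v, rfl⟩ := hy
  replace h : 2 * x ^ 2 + 27 * v ^ 2 = n := by linarith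
  have hv : Odd v := by
    have hv_sq : Odd (v ^ 2) := Int.odd_iff.mpr (by lia)
    exact (Int.odd_pow' two_ne_zero).mp hv_sq
  have hv_mod : 8 ∣ v ^ 2 - 1 := Int.eight_dvd_sq_sub_one_of_odd hv
  have hx_sq : Even (x ^ 2) := Int.even_iff.mpr (by lia)
  exact (Int.even_pow.mp hx_sq).1

theorem form_eight_twentySeven_ne_eight_mul (hn : n % 3 = 2) : 8 * x ^ 2 + 27 * y ^ 2 ≠ 8 * n := by
  intro h
  have hx_sq : x ^ 2 ≡ 2 [ZMOD 3] := by
    rw [Int.ModEq]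
    lia
  have hnonsquare : ∀ r : ZMod 3, r ^ 2 ≠ 2 := by decide
  exact hnonsquare x (by exact_mod_cast (ZMod.intCast_eq_intCast_iff _ _ 3).mpr hx_sq)

theorem exists_form_eight_twentySeven_eq_of_eq_mul {j : ℤ} (hn : n % 24 = 11)
    (hj : j ∈ ({1, 4, 8} : Set ℤ)) (h : 8 * x ^ 2 + 27 * y ^ 2 = j * n) :
    ∃ u v : ℤ, 8 * u ^ 2 + 27 * v ^ 2 = n := by
  obtain rfl | rfl | rfl := hj
  · exact ⟨x, y, by rw [h, one_mul]⟩
  · obtain ⟨⟨u, rfl⟩, ⟨v, rfl⟩⟩ := even_and_even_of_form_eight_twentySeven_eq_four_mul (by lia) h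
    exact ⟨u, v, by linarith⟩
  · exact absurd h (form_eight_twentySeven_ne_eight_mul (by lia))

end FormEightTwentySeven

theorem stmt_15_general (p : ℕ) (hp : p.Prime) (hp24 : p % 24 = 11)
    (hsol : ∃ j ∈ ({1, 4, 8} : Set ℤ), ∃ x y : ℤ, 8 * x ^ 2 + 27 * y ^ 2 = j * p) :
    {q : ℤ × ℤ | 8 * q.1 ^ 2 + 27 * q.2 ^ 2 = (p : ℤ) ∧ Int.gcd q.1 q.2 = 1}.ncard = 4 := by
  obtain ⟨j, hj, x, y, hxy⟩ := hsol
  obtain ⟨u, v, huv⟩ := exists_form_eight_twentySeven_eq_of_eq_mul (by lia) hj hxy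
  have hu : u ≠ 0 := by rintro rfl; lia
  have hv : v ≠ 0 := by rintro rfl; lia
  have hcoprime : IsCoprime (8 : ℤ) 27 := by norm_num
  exact ncard_primitiveSolutions_of_prime hcoprime (by norm_num)
    (Nat.prime_iff_prime_int.mp hp) hu hv huv

theorem stmt_15 (p : ℕ) (hp : p.Prime) (hp24 : p % 24 = 11)
    (hsol : ∃ j ∈ ({1, 4, 8} : Set ℤ), ∃ x y : ℤ,
      8 * x ^ 2 + 27 * y ^ 2 = j * p ∧ Int.gcd x y = 1) :
    {q : ℤ × ℤ | 8 * q.1 ^ 2 + 27 * q.2 ^ 2 = (p : ℤ) ∧ Int.gcd q.1 q.2 = 1}.ncard = 4 := by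
  obtain ⟨j, hj, x, y, hxy, -⟩ := hsol
  exact stmt_15_general p hp hp24 ⟨j, hj, x, y, hxy⟩
end
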